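/- Let X = {a, b, c} be a 3-element set and k ≥ 3. The hyperplanes of the combinatorial Veronesian V(X, k) are exactly the following seven sets (where 'u ∈ m' means that the multiset m contains u with multiplicity at least 1, and u^k is the multiset consisting of u repeated k times): H₁(u) = {m : u ∈ m} for each u ∈ X; H₂(u) = {u^k} ∪ {m : x ∈ m and y ∈ m} for each u ∈ X, where {x, y} = X \ {u}; and the set {a^k, b^k, c^k} ∪ {m : a ∈ m, b ∈ m and c ∈ m}. In particular, V(X, k) has exactly 7 hyperplanes. -/

import Mathlib

/-!
A set of points that contains one or three points of each (three-element) line is the same as a set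
whose complement has an indicator function summing to `0` in `𝔽₂` along each line. So the
hyperplanes of `V(X, k)` correspond to the nonzero vectors of the space `K` of such
functions (`isHyperplane_iff_parity`). The indicators of `{m : u ∉ m}`, for `u = a, b, c`, lie in
`K`: on the line `e∘X^i` the point `e + i·u` contains `u`, and the other two points both contain
`u` or both avoid it. Their seven nonzero combinations are the indicators of the
complements of the seven listed sets.

It remains to see `dim K ≤ 3`, which is `eq_false_of_three`: a function of `K` vanishing at
`b c^(k-1)`, `a c^(k-1)` and `a b^(k-1)` is zero. The points containing `c` form a copy of
`V(X, k-1)`, so by induction on `k` the function vanishes where `c` has multiplicity at least two and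
has a constant value `t` where `c` has multiplicity one. On the points `a^x b^y` the lines with
`i = 1` say that raising `x` by one changes the value by `t`, and a line with `i = 3` says that
raising it by three changes nothing; hence `t = 0`, and the value is a constant, equal to `0`.
So the hyperplanes are the zero sets of these seven combinations (`isHyperplane_iff`).

Functions with values in `𝔽₂` are encoded as `Bool`-valued, with `^^` (exclusive or) as addition.
-/

/-- An incidence structure: a set of points and a family of lines (subsets of points). -/
structure IncStruct (α : Type*) where
  pts : Set α
  lines : Set (Set α)

/-- A partial Steiner triple system: finitely many points, every line is a 3-element
subset of the point set, and two distinct points lie on at most one common line. -/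
def IsPSTS {α : Type*} (M : IncStruct α) : Prop :=
  M.pts.Finite ∧
  (∀ L ∈ M.lines, L ⊆ M.pts ∧ L.ncard = 3) ∧
  (∀ L₁ ∈ M.lines, ∀ L₂ ∈ M.lines, ∀ x y : α,
    x ≠ y → x ∈ L₁ → y ∈ L₁ → x ∈ L₂ → y ∈ L₂ → L₁ = L₂)

/-- A subspace: every line having two distinct points in `Y` is contained in `Y`. -/
def IsSubspace {α : Type*} (M : IncStruct α) (Y : Set α) : Prop :=
  Y ⊆ M.pts ∧ ∀ L ∈ M.lines, ∀ x ∈ L ∩ Y, ∀ y ∈ L ∩ Y, x ≠ y → L ⊆ Y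

/-- A hyperplane: a proper subspace meeting every line. -/
def IsHyperplane {α : Type*} (M : IncStruct α) (Y : Set α) : Prop :=
  IsSubspace M Y ∧ Y ≠ M.pts ∧ ∀ L ∈ M.lines, (L ∩ Y).Nonempty

/-- `Y₁ ⋔ Y₂` relative to the ambient set `S`. -/
def hcap {α : Type*} (S Y₁ Y₂ : Set α) : Set α :=
  (Y₁ ∩ Y₂) ∪ ((S \ Y₁) ∩ (S \ Y₂))

/-- `℘₂(Z)`: the family of 2-element subsets of `Z`. -/
def pairs {α : Type*} (Z : Set α) : Set (Set α) :=
  {e | e ⊆ Z ∧ e.ncard = 2}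

/-- `H(A | B) = ℘₂(A) ∪ ℘₂(B)`. -/
def Hgt {α : Type*} (A B : Set α) : Set (Set α) := pairs A ∪ pairs B

/-- A `B(N)`-configuration (`N = n + c`): a PSTS with `C(N,2)` points, `C(N,3)` lines,
and each point on exactly `N - 2` lines. -/
def IsBConfig {α : Type*} (M : IncStruct α) (N : ℕ) : Prop :=
  IsPSTS M ∧ M.pts.ncard = N.choose 2 ∧ M.lines.ncard = N.choose 3 ∧
  ∀ p ∈ M.pts, {L | L ∈ M.lines ∧ p ∈ L}.ncard = N - 2

/-- `M` freely contains the complete graph `K_X`. -/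
def FreelyContains {α : Type*} (M : IncStruct α) (X : Set α) : Prop :=
  X ⊆ M.pts ∧
  (∀ x ∈ X, ∀ y ∈ X, x ≠ y → ∃ L ∈ M.lines, x ∈ L ∧ y ∈ L) ∧
  (∀ L ∈ M.lines, ∀ x ∈ L ∩ X, ∀ y ∈ L ∩ X, ∀ z ∈ L ∩ X, x = y ∨ y = z ∨ x = z) ∧
  (∀ L₁ ∈ M.lines, ∀ L₂ ∈ M.lines, ∀ a₁ ∈ X, ∀ a₂ ∈ X, ∀ b₁ ∈ X, ∀ b₂ ∈ X,
    a₁ ≠ a₂ → b₁ ≠ b₂ → ({a₁, a₂} : Set α) ∩ {b₁, b₂} = ∅ →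
    a₁ ∈ L₁ → a₂ ∈ L₁ → b₁ ∈ L₂ → b₂ ∈ L₂ → L₁ ∩ L₂ = ∅)

/-- Restriction of an incidence structure to a set `D` of points. -/
def restr {α : Type*} (M : IncStruct α) (D : Set α) : IncStruct α :=
  ⟨D, {L | L ∈ M.lines ∧ L ⊆ D}⟩

/-- Isomorphism of incidence structures: a bijection between the point sets
mapping the lines of one structure exactly onto the lines of the other. -/
def IsIso {α β : Type*} (M : IncStruct α) (N : IncStruct β) : Prop :=
  ∃ φ : α → β, Set.BijOn φ M.pts N.pts ∧ (fun L => φ '' L) '' M.lines = N.lines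

/-- The generalized Desargues configuration `G(X,2)`. -/
def Gdes {α : Type*} (X : Set α) : IncStruct (Set α) :=
  ⟨pairs X, {L | ∃ Z ⊆ X, Z.ncard = 3 ∧ L = pairs Z}⟩

/-- The combinatorial Veronesian `V(X, k)`, `X = {a, b, c}`: points are the multisets of
size `k` with elements in `X`; lines are the sets
`e∘X^i = {e + i·a, e + i·b, e + i·c}` with `i ≥ 1` and `|e| = k - i`. -/
def Ver {γ : Type*} (a b c : γ) (k : ℕ) : IncStruct (Multiset γ) :=
  ⟨{m | Multiset.card m = k ∧ ∀ x ∈ m, x = a ∨ x = b ∨ x = c},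
   {L | ∃ i : ℕ, ∃ e : Multiset γ, 1 ≤ i ∧ Multiset.card e + i = k ∧
       (∀ x ∈ e, x = a ∨ x = b ∨ x = c) ∧
       L = {e + Multiset.replicate i a, e + Multiset.replicate i b,
            e + Multiset.replicate i c}}⟩

namespace Veronesian

/-! ### Functions summing to zero along the lines -/

/-- `f`, a function of the three multiplicities, sums to zero along each line of `V(X, k)`. -/
def LineSumZero (k : ℕ) (f : ℕ → ℕ → ℕ → Bool) : Prop :=
  ∀ x y z i, 1 ≤ i → x + y + z + i = k →
    (f (x + i) y z ^^ f x (y + i) z ^^ f x y (z + i)) = false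

/-- The combination, with coefficients `α, β, γ`, of the indicators of the vanishing of the
three multiplicities. -/
def comb (α β γ : Bool) (x y z : ℕ) : Bool :=
  (α && decide (x = 0)) ^^ (β && decide (y = 0)) ^^ (γ && decide (z = 0))

lemma lineSumZero_comb (k : ℕ) (α β γ : Bool) : LineSumZero k (comb α β γ) := by
  intro x y z i hi _
  have h : i ≠ 0 := by omega
  simp only [comb, Nat.add_eq_zero_iff, h, and_false, decide_false, Bool.and_false]
  cases (α && decide (x = 0)) <;> cases (β && decide (y = 0)) <;>
    cases (γ && decide (z = 0)) <;> rfl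

lemma LineSumZero.xor {k : ℕ} {f g : ℕ → ℕ → ℕ → Bool} (hf : LineSumZero k f)
    (hg : LineSumZero k g) : LineSumZero k (fun x y z => f x y z ^^ g x y z) := by
  intro x y z i hi hk
  have h₁ := hf x y z i hi hk
  have h₂ := hg x y z i hi hk
  revert h₁ h₂
  dsimp only
  generalize f (x + i) y z = p₁, f x (y + i) z = p₂, f x y (z + i) = p₃,
    g (x + i) y z = q₁, g x (y + i) z = q₂, g x y (z + i) = q₃
  revert p₁ p₂ p₃ q₁ q₂ q₃
  decide

/-- A function summing to zero along lines is determined by its values at three points. The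
induction starts with `V(X, 2)`, where the lines with `i = 1` express the value at each `u²` through
the three given ones. -/
lemma eq_false_of_three (k : ℕ) (f : ℕ → ℕ → ℕ → Bool) (hf : LineSumZero (k + 2) f)
    (h₁ : f 0 1 (k + 1) = false) (h₂ : f 1 0 (k + 1) = false) (h₃ : f 1 (k + 1) 0 = false) :
    ∀ x y z, x + y + z = k + 2 → f x y z = false := by
  induction k generalizing f with
  | zero =>
    have l₁ := hf 1 0 0 1 le_rfl rfl
    have l₂ := hf 0 1 0 1 le_rfl rfl
    have l₃ := hf 0 0 1 1 le_rfl rfl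
    simp only [Nat.zero_add, Nat.reduceAdd] at h₁ h₂ h₃ l₁ l₂ l₃
    simp only [h₁, h₂, h₃, Bool.xor_false, Bool.false_xor] at l₁ l₂ l₃
    intro x y z h
    have hx : x ≤ 2 := by omega
    have hy : y ≤ 2 := by omega
    obtain rfl : z = 2 - x - y := by omega
    interval_cases x <;> interval_cases y <;> first | assumption | omega
  | succ k ih =>
    obtain ⟨t, ht⟩ : ∃ t, t = f 1 (k + 1) 1 := ⟨_, rfl⟩
    have hg : LineSumZero (k + 2) (fun x y z => f x y (z + 1)) := by
      intro x y z i hi h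
      have := hf x y (z + 1) i hi (by omega)
      rwa [show z + 1 + i = z + i + 1 by omega] at this
    -- On the copy of `V(X, k - 1)`, subtracting `t` times the third indicator makes the three
    -- prescribed values vanish.
    have key : ∀ x y z, x + y + z = k + 2 →
        (f x y (z + 1) ^^ comb false false t x y z) = false := by
      refine ih _ (hg.xor (lineSumZero_comb _ _ _ _)) ?_ ?_ ?_
      · simp [comb, h₁]
      · simp [comb, h₂]
      · simp [comb, ht]
    have hone : ∀ x y, x + y = k + 2 → f x y 1 = t := by
      intro x y h
      simpa [comb] using key x y 0 (by omega)
    have htwo : ∀ x y z, x + y + z = k + 1 → f x y (z + 2) = false := by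
      intro x y z h
      simpa [comb] using key x y (z + 1) (by omega)
    have bool_step : ∀ p q t : Bool, (p ^^ q ^^ t) = false → p = (q ^^ t) := by decide
    have bool_three : ∀ p t : Bool, (p ^^ t ^^ t ^^ t ^^ p ^^ false) = false → t = false := by
      decide
    have step : ∀ x y, x + y = k + 2 → f (x + 1) y 0 = (f x (y + 1) 0 ^^ t) := by
      intro x y h
      have := hf x y 0 1 le_rfl (by omega)
      rw [Nat.zero_add, hone x y h] at this
      exact bool_step _ _ _ this
    have ht0 : t = false := by
      have s₁ := step 0 (k + 2) (by omega)
      have s₂ := step 1 (k + 1) (by omega)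
      have s₃ := step 2 k (by omega)
      have l := hf 0 k 0 3 (by omega) (by omega)
      have e := htwo 0 k 1 (by omega)
      simp only [Nat.zero_add, Nat.reduceAdd, Nat.add_assoc] at s₁ s₂ s₃ l e
      rw [e, s₃, s₂, s₁] at l
      exact bool_three _ _ l
    subst ht0
    have hzero : ∀ x y, x + y = k + 3 → f x y 0 = false := by
      have s₁ := step 0 (k + 2) (by omega)
      intro x
      induction x with
      | zero =>
        intro y h
        obtain rfl : y = k + 3 := by omega
        simpa [h₃] using s₁.symm.trans h₃
      | succ x ihx =>
        intro y h
        rw [step x y (by omega), ihx (y + 1) (by omega)]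
        rfl
    intro x y z h
    match z with
    | 0 => exact hzero x y (by omega)
    | 1 => exact hone x y (by omega)
    | z + 2 => exact htwo x y z (by omega)

lemma eq_comb {k : ℕ} (hk : 2 ≤ k) {f : ℕ → ℕ → ℕ → Bool} (hf : LineSumZero k f) :
    ∃ α β γ, ∀ x y z, x + y + z = k → f x y z = comb α β γ x y z := by
  obtain ⟨k, rfl⟩ := Nat.exists_eq_add_of_le' hk
  refine ⟨f 0 1 (k + 1), f 1 0 (k + 1), f 1 (k + 1) 0, fun x y z h => ?_⟩
  have := eq_false_of_three k _ (hf.xor (lineSumZero_comb _ (f 0 1 (k + 1)) (f 1 0 (k + 1))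
    (f 1 (k + 1) 0))) (by simp [comb]) (by simp [comb]) (by simp [comb]) x y z h
  simpa using this

/-! ### Points and lines in terms of multiplicities -/

variable {γ : Type*} {a b c : γ}

/-- The multiset in which `a`, `b`, `c` have multiplicities `x`, `y`, `z`. -/
def pt (a b c : γ) (x y z : ℕ) : Multiset γ :=
  Multiset.replicate x a + Multiset.replicate y b + Multiset.replicate z c

lemma card_pt (x y z : ℕ) : Multiset.card (pt a b c x y z) = x + y + z := by
  simp [pt]

lemma exists_pt (m : Multiset γ) (hm : ∀ x ∈ m, x = a ∨ x = b ∨ x = c) :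
    ∃ x y z, m = pt a b c x y z := by
  induction m using Multiset.induction with
  | empty => exact ⟨0, 0, 0, by simp [pt]⟩
  | cons u m ih =>
    obtain ⟨x, y, z, rfl⟩ := ih fun v hv => hm v (Multiset.mem_cons_of_mem hv)
    obtain rfl | rfl | rfl := hm u (Multiset.mem_cons_self _ _)
    · exact ⟨x + 1, y, z, by simp [pt, Multiset.replicate_succ]⟩
    · exact ⟨x, y + 1, z, by simp [pt, Multiset.replicate_succ]⟩
    · exact ⟨x, y, z + 1, by simp [pt, Multiset.replicate_succ]⟩

lemma pt_support (x y z : ℕ) : ∀ u ∈ pt a b c x y z, u = a ∨ u = b ∨ u = c := by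
  intro u hu
  simp only [pt, Multiset.mem_add] at hu
  obtain (hu | hu) | hu := hu
  · exact Or.inl (Multiset.eq_of_mem_replicate hu)
  · exact Or.inr (Or.inl (Multiset.eq_of_mem_replicate hu))
  · exact Or.inr (Or.inr (Multiset.eq_of_mem_replicate hu))

lemma mem_pts_iff {k : ℕ} {m : Multiset γ} :
    m ∈ (Ver a b c k).pts ↔ ∃ x y z, x + y + z = k ∧ m = pt a b c x y z := by
  constructor
  · rintro ⟨h, hm⟩
    obtain ⟨x, y, z, rfl⟩ := exists_pt m hm
    exact ⟨x, y, z, by rw [← h, card_pt], rfl⟩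
  · rintro ⟨x, y, z, h, rfl⟩
    exact ⟨by rw [card_pt, h], pt_support x y z⟩

lemma pt_mem_pts {k x y z : ℕ} (h : x + y + z = k) : pt a b c x y z ∈ (Ver a b c k).pts :=
  mem_pts_iff.2 ⟨x, y, z, h, rfl⟩

lemma mem_lines_iff {k : ℕ} {L : Set (Multiset γ)} :
    L ∈ (Ver a b c k).lines ↔ ∃ x y z i, 1 ≤ i ∧ x + y + z + i = k ∧
      L = {pt a b c (x + i) y z, pt a b c x (y + i) z, pt a b c x y (z + i)} := by
  have key : ∀ x y z i : ℕ,
      ({pt a b c x y z + Multiset.replicate i a, pt a b c x y z + Multiset.replicate i b,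
        pt a b c x y z + Multiset.replicate i c} : Set (Multiset γ)) =
      {pt a b c (x + i) y z, pt a b c x (y + i) z, pt a b c x y (z + i)} := by
    intro x y z i
    simp only [pt, Multiset.replicate_add]
    congr 1
    · abel
    · congr 1
      · abel
      · congr 1; abel
  constructor
  · rintro ⟨i, e, hi, hk, he, rfl⟩
    obtain ⟨x, y, z, rfl⟩ := exists_pt e he
    exact ⟨x, y, z, i, hi, by rw [← hk, card_pt], key x y z i⟩
  · rintro ⟨x, y, z, i, hi, hk, rfl⟩
    exact ⟨i, pt a b c x y z, hi, by rw [card_pt, hk], pt_support x y z, (key x y z i).symm⟩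

lemma mem_pt_a (hab : a ≠ b) (hac : a ≠ c) (x y z : ℕ) : a ∈ pt a b c x y z ↔ x ≠ 0 := by
  simp [pt, Multiset.mem_replicate, hab, hac]

lemma mem_pt_b (hab : a ≠ b) (hbc : b ≠ c) (x y z : ℕ) : b ∈ pt a b c x y z ↔ y ≠ 0 := by
  simp [pt, Multiset.mem_replicate, hab.symm, hbc]

lemma mem_pt_c (hac : a ≠ c) (hbc : b ≠ c) (x y z : ℕ) : c ∈ pt a b c x y z ↔ z ≠ 0 := by
  simp [pt, Multiset.mem_replicate, hac.symm, hbc.symm]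

lemma pt_inj (hab : a ≠ b) (hac : a ≠ c) (hbc : b ≠ c) {x y z x' y' z' : ℕ} :
    pt a b c x y z = pt a b c x' y' z' ↔ x = x' ∧ y = y' ∧ z = z' := by
  classical
  constructor
  · intro h
    have ha := congrArg (Multiset.count a) h
    have hb := congrArg (Multiset.count b) h
    have hc := congrArg (Multiset.count c) h
    simp [pt, Multiset.count_replicate, hab, hac, hbc, hab.symm, hac.symm, hbc.symm] at ha hb hc
    exact ⟨ha, hb, hc⟩
  · rintro ⟨rfl, rfl, rfl⟩
    rfl

/-! ### Hyperplanes as zero sets -/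

/-- A set meets a three-element line and contains it once it contains two of its points, if and only
if it contains one or three of its points. -/
lemma line_parity {α : Type*} {p q r : α} (hpq : p ≠ q) (hpr : p ≠ r) (hqr : q ≠ r) (H : Set α) :
    ((∀ x ∈ {p, q, r} ∩ H, ∀ y ∈ {p, q, r} ∩ H, x ≠ y → {p, q, r} ⊆ H) ∧
      (({p, q, r} : Set α) ∩ H).Nonempty) ↔ (p ∈ H ↔ (q ∈ H ↔ r ∈ H)) := by
  have hsub : ({p, q, r} : Set α) ⊆ H ↔ p ∈ H ∧ q ∈ H ∧ r ∈ H := by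
    simp [Set.insert_subset_iff]
  have hne : (({p, q, r} : Set α) ∩ H).Nonempty ↔ p ∈ H ∨ q ∈ H ∨ r ∈ H := by
    simp [Set.Nonempty]
  rw [hsub, hne]
  constructor
  · rintro ⟨h, h'⟩
    have h₁ := fun hp hq => h p ⟨by simp, hp⟩ q ⟨by simp, hq⟩ hpq
    have h₂ := fun hp hr => h p ⟨by simp, hp⟩ r ⟨by simp, hr⟩ hpr
    have h₃ := fun hq hr => h q ⟨by simp, hq⟩ r ⟨by simp, hr⟩ hqr
    clear h
    by_cases hp : p ∈ H <;> by_cases hq : q ∈ H <;> by_cases hr : r ∈ H <;> simp_all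
  · intro h
    refine ⟨?_, by tauto⟩
    rintro x ⟨hx, hxH⟩ y ⟨hy, hyH⟩ hxy
    simp only [Set.mem_insert_iff, Set.mem_singleton_iff] at hx hy
    by_cases hp : p ∈ H <;> by_cases hq : q ∈ H <;> by_cases hr : r ∈ H <;>
      simp only [hp, hq, hr, iff_true, iff_false, not_true] at h ⊢ <;> grind

open Classical in
/-- The hyperplanes are the sets of points whose complement is nonempty and has an indicator summing
to zero along each line. -/
lemma isHyperplane_iff_parity (hab : a ≠ b) (hac : a ≠ c) (hbc : b ≠ c) {k : ℕ}
    {H : Set (Multiset γ)} :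
    IsHyperplane (Ver a b c k) H ↔ H ⊆ (Ver a b c k).pts ∧ H ≠ (Ver a b c k).pts ∧
      LineSumZero k (fun x y z => decide (pt a b c x y z ∉ H)) := by
  have hbool : ∀ P Q R : Prop, ((decide (¬ P) ^^ decide (¬ Q) ^^ decide (¬ R)) = false) ↔
      (P ↔ (Q ↔ R)) := by
    intro P Q R
    by_cases P <;> by_cases Q <;> by_cases R <;> simp [*]
  have hline : ∀ x y z i, 1 ≤ i → _ := fun x y z i (hi : 1 ≤ i) =>
    line_parity (p := pt a b c (x + i) y z) (q := pt a b c x (y + i) z)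
      (r := pt a b c x y (z + i)) (by rw [Ne, pt_inj hab hac hbc]; omega)
      (by rw [Ne, pt_inj hab hac hbc]; omega) (by rw [Ne, pt_inj hab hac hbc]; omega) H
  constructor
  · rintro ⟨⟨h₁, h₂⟩, h₃, h₄⟩
    refine ⟨h₁, h₃, fun x y z i hi hk => (hbool _ _ _).2 ((hline x y z i hi).1 ?_)⟩
    have hL := (mem_lines_iff (a := a) (b := b) (c := c)).2 ⟨x, y, z, i, hi, hk, rfl⟩
    exact ⟨h₂ _ hL, h₄ _ hL⟩
  · rintro ⟨h₁, h₂, h₃⟩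
    have key : ∀ L ∈ (Ver a b c k).lines,
        (∀ x ∈ L ∩ H, ∀ y ∈ L ∩ H, x ≠ y → L ⊆ H) ∧ (L ∩ H).Nonempty := by
      intro L hL
      obtain ⟨x, y, z, i, hi, hk, rfl⟩ := mem_lines_iff.1 hL
      exact (hline x y z i hi).2 ((hbool _ _ _).1 (h₃ x y z i hi hk))
    exact ⟨⟨h₁, fun L hL => (key L hL).1⟩, h₂, fun L hL => (key L hL).2⟩

/-- The set of points at which the combination of the three indicators with coefficients `t`
vanishes. -/
def zeroSet (a b c : γ) (k : ℕ) (t : Bool × Bool × Bool) : Set (Multiset γ) :=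
  {m | ∃ x y z, x + y + z = k ∧ m = pt a b c x y z ∧ comb t.1 t.2.1 t.2.2 x y z = false}

lemma pt_mem_zeroSet (hab : a ≠ b) (hac : a ≠ c) (hbc : b ≠ c) {k x y z : ℕ}
    (h : x + y + z = k) (t : Bool × Bool × Bool) :
    pt a b c x y z ∈ zeroSet a b c k t ↔ comb t.1 t.2.1 t.2.2 x y z = false := by
  constructor
  · rintro ⟨x', y', z', -, he, h'⟩
    obtain ⟨rfl, rfl, rfl⟩ := (pt_inj hab hac hbc).1 he
    exact h'
  · exact fun h' => ⟨x, y, z, h, rfl, h'⟩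

lemma zeroSet_subset {k : ℕ} (t : Bool × Bool × Bool) :
    zeroSet a b c k t ⊆ (Ver a b c k).pts := by
  rintro m ⟨x, y, z, h, rfl, -⟩
  exact pt_mem_pts h

lemma zeroSet_injective (hab : a ≠ b) (hac : a ≠ c) (hbc : b ≠ c) {k : ℕ} (hk : 2 ≤ k) :
    Function.Injective (zeroSet a b c k) := by
  obtain ⟨k, rfl⟩ := Nat.exists_eq_add_of_le' hk
  have hval : ∀ {t t' : Bool × Bool × Bool}, zeroSet a b c (k + 2) t = zeroSet a b c (k + 2) t' →
      ∀ x y z, x + y + z = k + 2 → (comb t.1 t.2.1 t.2.2 x y z = false ↔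
        comb t'.1 t'.2.1 t'.2.2 x y z = false) := by
    intro t t' h x y z hs
    rw [← pt_mem_zeroSet hab hac hbc hs, h, pt_mem_zeroSet hab hac hbc hs]
  rintro ⟨α, β, δ⟩ ⟨α', β', δ'⟩ h
  have h₁ := hval h 0 1 (k + 1) (by omega)
  have h₂ := hval h 1 0 (k + 1) (by omega)
  have h₃ := hval h 1 (k + 1) 0 (by omega)
  simp [comb] at h₁ h₂ h₃
  simp only [Prod.mk.injEq]
  exact ⟨by grind, by grind, by grind⟩

lemma zeroSet_zero (k : ℕ) :
    zeroSet a b c k (false, false, false) = (Ver a b c k).pts := by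
  ext m
  simp [zeroSet, mem_pts_iff, comb]

/-- The hyperplanes are the zero sets of the nonzero combinations of the three indicators. -/
lemma isHyperplane_iff (hab : a ≠ b) (hac : a ≠ c) (hbc : b ≠ c) {k : ℕ} (hk : 2 ≤ k)
    {H : Set (Multiset γ)} :
    IsHyperplane (Ver a b c k) H ↔ ∃ t, t ≠ (false, false, false) ∧ zeroSet a b c k t = H := by
  classical
  rw [isHyperplane_iff_parity hab hac hbc]
  constructor
  · rintro ⟨h₁, h₂, h₃⟩
    obtain ⟨α, β, δ, h⟩ := eq_comb hk h₃
    have hH : zeroSet a b c k (α, β, δ) = H := by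
      ext m
      constructor
      · rintro ⟨x, y, z, hs, rfl, hm⟩
        exact not_not.1 (of_decide_eq_false ((h x y z hs).trans hm))
      · intro hm
        obtain ⟨x, y, z, hs, rfl⟩ := mem_pts_iff.1 (h₁ hm)
        exact ⟨x, y, z, hs, rfl, by rw [← h x y z hs]; simpa using hm⟩
    refine ⟨_, ?_, hH⟩
    intro h0
    rw [h0, zeroSet_zero] at hH
    exact h₂ hH.symm
  · rintro ⟨t, ht, rfl⟩
    refine ⟨zeroSet_subset t, ?_, ?_⟩
    · rw [← zeroSet_zero]
      exact (zeroSet_injective hab hac hbc hk).ne ht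
    · intro x y z i hi hs
      have := lineSumZero_comb k t.1 t.2.1 t.2.2 x y z i hi hs
      simpa [pt_mem_zeroSet hab hac hbc (show x + i + y + z = k by omega),
        pt_mem_zeroSet hab hac hbc (show x + (y + i) + z = k by omega),
        pt_mem_zeroSet hab hac hbc (show x + y + (z + i) = k by omega)] using this

/-- To identify a set of points with a `zeroSet`, compare them on the points `pt a b c x y z`. -/
lemma eq_zeroSet {k : ℕ} {S : Set (Multiset γ)}
    (hS : S ⊆ (Ver a b c k).pts) (t : Bool × Bool × Bool)
    (h : ∀ x y z, x + y + z = k →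
      (pt a b c x y z ∈ S ↔ comb t.1 t.2.1 t.2.2 x y z = false)) :
    zeroSet a b c k t = S := by
  ext m
  constructor
  · rintro ⟨x, y, z, hs, rfl, hm⟩
    exact (h x y z hs).2 hm
  · intro hm
    obtain ⟨x, y, z, hs, rfl⟩ := mem_pts_iff.1 (hS hm)
    exact ⟨x, y, z, hs, rfl, (h x y z hs).1 hm⟩

end Veronesian

open Veronesian

/-- For `X = {a, b, c}` and `k ≥ 3`, the hyperplanes of `V(X, k)` are
exactly the seven sets `H₁(u)` (`u ∈ X`), `H₂(u)` (`u ∈ X`), and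
`{a^k, b^k, c^k} ∪ {m : a, b, c ∈ m}`; in particular there are exactly 7 of them. -/
theorem stmt_19 {γ : Type*} (a b c : γ) (hab : a ≠ b) (hac : a ≠ c) (hbc : b ≠ c)
    (k : ℕ) (hk : 3 ≤ k) :
    (∀ H : Set (Multiset γ), IsHyperplane (Ver a b c k) H ↔
      (H = {m | m ∈ (Ver a b c k).pts ∧ a ∈ m} ∨
       H = {m | m ∈ (Ver a b c k).pts ∧ b ∈ m} ∨
       H = {m | m ∈ (Ver a b c k).pts ∧ c ∈ m} ∨
       H = insert (Multiset.replicate k a)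
             {m | m ∈ (Ver a b c k).pts ∧ b ∈ m ∧ c ∈ m} ∨
       H = insert (Multiset.replicate k b)
             {m | m ∈ (Ver a b c k).pts ∧ a ∈ m ∧ c ∈ m} ∨
       H = insert (Multiset.replicate k c)
             {m | m ∈ (Ver a b c k).pts ∧ a ∈ m ∧ b ∈ m} ∨
       H = {Multiset.replicate k a, Multiset.replicate k b, Multiset.replicate k c} ∪
             {m | m ∈ (Ver a b c k).pts ∧ a ∈ m ∧ b ∈ m ∧ c ∈ m})) ∧
    {H : Set (Multiset γ) | IsHyperplane (Ver a b c k) H}.ncard = 7 := by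
  have hk2 : 2 ≤ k := by omega
  have ra : Multiset.replicate k a = pt a b c k 0 0 := by simp [pt]
  have rb : Multiset.replicate k b = pt a b c 0 k 0 := by simp [pt]
  have rc : Multiset.replicate k c = pt a b c 0 0 k := by simp [pt]
  have pa : pt a b c k 0 0 ∈ (Ver a b c k).pts := pt_mem_pts (by omega)
  have pb : pt a b c 0 k 0 ∈ (Ver a b c k).pts := pt_mem_pts (by omega)
  have pc : pt a b c 0 0 k ∈ (Ver a b c k).pts := pt_mem_pts (by omega)
  constructor
  · intro H
    rw [isHyperplane_iff hab hac hbc hk2, ra, rb, rc]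
    have e₁ : zeroSet a b c k (true, false, false) = {m | m ∈ (Ver a b c k).pts ∧ a ∈ m} := by
      refine eq_zeroSet (fun m hm => hm.1) _ fun x y z hs => ?_
      simp [pt_mem_pts hs, mem_pt_a hab hac, comb]
    have e₂ : zeroSet a b c k (false, true, false) = {m | m ∈ (Ver a b c k).pts ∧ b ∈ m} := by
      refine eq_zeroSet (fun m hm => hm.1) _ fun x y z hs => ?_
      simp [pt_mem_pts hs, mem_pt_b hab hbc, comb]
    have e₃ : zeroSet a b c k (false, false, true) = {m | m ∈ (Ver a b c k).pts ∧ c ∈ m} := by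
      refine eq_zeroSet (fun m hm => hm.1) _ fun x y z hs => ?_
      simp [pt_mem_pts hs, mem_pt_c hac hbc, comb]
    have e₄ : zeroSet a b c k (false, true, true) = insert (pt a b c k 0 0)
        {m | m ∈ (Ver a b c k).pts ∧ b ∈ m ∧ c ∈ m} := by
      refine eq_zeroSet (Set.insert_subset pa fun m hm => hm.1) _ fun x y z hs => ?_
      simp [pt_mem_pts hs, mem_pt_b hab hbc, mem_pt_c hac hbc, comb, pt_inj hab hac hbc]
      omega
    have e₅ : zeroSet a b c k (true, false, true) = insert (pt a b c 0 k 0)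
        {m | m ∈ (Ver a b c k).pts ∧ a ∈ m ∧ c ∈ m} := by
      refine eq_zeroSet (Set.insert_subset pb fun m hm => hm.1) _ fun x y z hs => ?_
      simp [pt_mem_pts hs, mem_pt_a hab hac, mem_pt_c hac hbc, comb, pt_inj hab hac hbc]
      omega
    have e₆ : zeroSet a b c k (true, true, false) = insert (pt a b c 0 0 k)
        {m | m ∈ (Ver a b c k).pts ∧ a ∈ m ∧ b ∈ m} := by
      refine eq_zeroSet (Set.insert_subset pc fun m hm => hm.1) _ fun x y z hs => ?_
      simp [pt_mem_pts hs, mem_pt_a hab hac, mem_pt_b hab hbc, comb, pt_inj hab hac hbc]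
      omega
    have e₇ : zeroSet a b c k (true, true, true) =
        {pt a b c k 0 0, pt a b c 0 k 0, pt a b c 0 0 k} ∪
          {m | m ∈ (Ver a b c k).pts ∧ a ∈ m ∧ b ∈ m ∧ c ∈ m} := by
      refine eq_zeroSet (Set.union_subset ?_ fun m hm => hm.1) _ fun x y z hs => ?_
      · rintro m (rfl | rfl | rfl) <;> assumption
      · simp [pt_mem_pts hs, mem_pt_a hab hac, mem_pt_b hab hbc, mem_pt_c hac hbc, comb,
          pt_inj hab hac hbc]
        by_cases hx : x = 0 <;> by_cases hy : y = 0 <;> by_cases hz : z = 0 <;>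
          simp [hx, hy, hz] <;> omega
    rw [← e₁, ← e₂, ← e₃, ← e₄, ← e₅, ← e₆, ← e₇]
    simp only [eq_comm (a := H)]
    constructor
    · rintro ⟨⟨_ | _, _ | _, _ | _⟩, ht, h⟩ <;> simp_all
    · rintro (h | h | h | h | h | h | h) <;> exact ⟨_, by simp, h⟩
  · have himg : {H : Set (Multiset γ) | IsHyperplane (Ver a b c k) H} =
        zeroSet a b c k '' (({(false, false, false)}ᶜ : Finset (Bool × Bool × Bool)) : Set _) := by
      ext H
      rw [Set.mem_ofPred_eq, isHyperplane_iff hab hac hbc hk2]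
      simp
    rw [himg, Set.ncard_image_of_injective _ (zeroSet_injective hab hac hbc hk2),
      Set.ncard_coe_finset]
    decide
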